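/- arXiv:1907.04605 — 5 statements merged into one kernel-verified Lean document; each statement's English description precedes it below -/
import Mathlib

section
/- Let m ≥ 1 and C > 0, and let f, h : [0, ∞) → ℝ be continuous functions such that for every 0 ≤ s ≤ t one has f(t) − f(s) ≤ −C ∫_s^t |f(τ)|^{m-1} f(τ) dτ and h(t) − h(s) = −C ∫_s^t |h(τ)|^{m-1} h(τ) dτ. If f(0) ≤ h(0), then f(t) ≤ h(t) for every t ≥ 0. -/
theorem aux_mono (p : ℝ) (hp : 0 ≤ p) (x y : ℝ) (hxy : x ≤ y) :
    |x| ^ p * x ≤ |y| ^ p * y := by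
  have hx := Real.rpow_nonneg (abs_nonneg x) p
  have hy := Real.rpow_nonneg (abs_nonneg y) p
  rcases le_total 0 x with h0 | h0
  · have : |x| ^ p ≤ |y| ^ p := Real.rpow_le_rpow (abs_nonneg x)
      (by rw [abs_of_nonneg h0, abs_of_nonneg (h0.trans hxy)]; exact hxy) hp
    nlinarith
  · rcases le_total 0 y with h1 | h1
    · nlinarith [mul_nonneg hy h1, mul_nonneg hx (neg_nonneg.2 h0)]
    · have : |y| ^ p ≤ |x| ^ p := Real.rpow_le_rpow (abs_nonneg y)
        (by rw [abs_of_nonpos h0, abs_of_nonpos h1]; linarith) hp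
      nlinarith

open intervalIntegral in
/-- Lemma B.2: a comparison principle for the integral form of the ODE `y' = -C|y|^{m-1}y`.
If `f(t) - f(s) ≤ -C ∫_s^t |f|^{m-1}f` and `h(t) - h(s) = -C ∫_s^t |h|^{m-1}h` for all
`0 ≤ s ≤ t`, with `f, h` continuous on `[0,∞)` and `f(0) ≤ h(0)`, then `f ≤ h` on `[0,∞)`. -/
theorem ode_comparison (m C : ℝ) (hm : 1 ≤ m) (hC : 0 < C)
    (f h : ℝ → ℝ)
    (hfc : ContinuousOn f (Set.Ici 0)) (hhc : ContinuousOn h (Set.Ici 0))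
    (hf : ∀ s t : ℝ, 0 ≤ s → s ≤ t →
      f t - f s ≤ -C * ∫ τ in s..t, |f τ| ^ (m - 1) * f τ)
    (hh : ∀ s t : ℝ, 0 ≤ s → s ≤ t →
      h t - h s = -C * ∫ τ in s..t, |h τ| ^ (m - 1) * h τ)
    (h0 : f 0 ≤ h 0) :
    ∀ t : ℝ, 0 ≤ t → f t ≤ h t := by
  intro t ht
  by_contra! hlt
  have hsub : Set.Icc 0 t ⊆ Set.Ici (0 : ℝ) := fun x hx => hx.1
  have hcl : IsClosed {x ∈ Set.Icc 0 t | f x ≤ h x} :=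
    isClosed_Icc.isClosed_le (hfc.mono hsub) (hhc.mono hsub)
  have hcp : IsCompact {x ∈ Set.Icc 0 t | f x ≤ h x} :=
    isCompact_Icc.of_isClosed_subset hcl (fun x hx => hx.1)
  obtain ⟨s, ⟨⟨hs0, hst⟩, hfs⟩, hmax⟩ := hcp.exists_isGreatest ⟨0, ⟨le_refl 0, ht⟩, h0⟩
  have hint : ∀ g : ℝ → ℝ, ContinuousOn g (Set.Ici 0) →
      IntervalIntegrable (fun τ => |g τ| ^ (m - 1) * g τ) MeasureTheory.volume s t := by
    intro g hg
    apply ContinuousOn.intervalIntegrable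
    have hg' : ContinuousOn g (Set.uIcc s t) := hg.mono (by
      rw [Set.uIcc_of_le hst]; exact fun x hx => hs0.trans hx.1)
    exact (hg'.abs.rpow_const (fun x _ => Or.inr (by linarith))).mul hg'
  have hmono := intervalIntegral.integral_mono_on_of_le_Ioo hst (hint h hhc) (hint f hfc)
    (fun x hx => aux_mono (m - 1) (by linarith) (h x) (f x) (by
      by_contra! hc
      have := hmax ⟨⟨hs0.trans hx.1.le, hx.2.le⟩, hc.le⟩
      linarith [hx.1]))
  have h1 := hf s t hs0 hst
  have h2 := hh s t hs0 hst
  have h3 := mul_le_mul_of_nonneg_left hmono hC.le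
  linarith
end

section
/- Let m > 1 and C > 0, and let f : [0, ∞) → [0, ∞) be a continuous function such that for every 0 ≤ s ≤ t one has f(t) − f(s) ≤ −C ∫_s^t f(τ)^m dτ. Then for every t > 0 one has f(t) ≤ (C(m−1)t)^{−1/(m−1)}. Moreover, if f(0) > 0 then for every t ≥ 0 one has f(t) ≤ (f(0)^{−(m−1)} + C(m−1)t)^{−1/(m−1)}. -/
theorem decay_key (m C : ℝ) (hm : 1 < m) (hC : 0 < C)
    (f : ℝ → ℝ) (hfc : ContinuousOn f (Set.Ici 0))
    (hfnonneg : ∀ t : ℝ, 0 ≤ t → 0 ≤ f t)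
    (hf : ∀ s t : ℝ, 0 ≤ s → s ≤ t → f t - f s ≤ -C * ∫ τ in s..t, f τ ^ m)
    (t : ℝ) (ht : 0 ≤ t) (hpos : 0 < f t) :
    0 < f 0 ∧ f 0 ^ (-(m - 1)) + C * (m - 1) * t ≤ f t ^ (-(m - 1)) := by
  have hhc : Continuous (fun τ : ℝ => f (max τ 0) ^ m) := by
    have h1 : Continuous (fun τ : ℝ => f (max τ 0)) :=
      hfc.comp_continuous (by fun_prop) (fun x => le_max_right x 0)
    exact h1.rpow_const (fun x => Or.inr (by linarith))
  set h : ℝ → ℝ := fun τ => f (max τ 0) ^ m with hh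
  have hh0 : ∀ x, 0 ≤ h x := fun x => Real.rpow_nonneg (hfnonneg _ (le_max_right x 0)) _
  set F : ℝ → ℝ := fun r => f t + C * ∫ τ in r..t, h τ with hF
  have hFd : ∀ r, HasDerivAt F (-(C * h r)) r := by
    intro r
    have h1 : HasDerivAt (fun u => ∫ τ in u..t, h τ) (-h r) r :=
      intervalIntegral.integral_hasDerivAt_left (hhc.intervalIntegrable _ _)
        (hhc.stronglyMeasurableAtFilter _ _) hhc.continuousAt
    have h2 := (h1.const_mul C).const_add (f t)
    rw [mul_neg] at h2
    exact h2
  have hFpos : ∀ r, r ≤ t → 0 < F r := by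
    intro r hr
    have : 0 ≤ ∫ τ in r..t, h τ := intervalIntegral.integral_nonneg hr (fun x _ => hh0 x)
    have := mul_nonneg hC.le this
    simp only [hF]; linarith
  have hFle : ∀ r, 0 ≤ r → r ≤ t → F r ≤ f r := by
    intro r h0 hr
    have h1 := hf r t h0 hr
    have h2 : ∫ τ in r..t, f τ ^ m = ∫ τ in r..t, h τ := by
      apply intervalIntegral.integral_congr
      intro x hx
      rw [Set.uIcc_of_le hr] at hx
      simp only [hh, max_eq_left (h0.trans hx.1)]
    rw [h2] at h1
    simp only [hF]; linarith
  have hFt : F t = f t := by simp [hF]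
  have hf0 : 0 < f 0 := (hFpos 0 ht).trans_le (hFle 0 le_rfl ht)
  refine ⟨hf0, ?_⟩
  have hGd : ∀ r, r ≤ t → HasDerivAt (fun r => F r ^ (-(m - 1)))
      (-(C * h r) * (-(m - 1)) * F r ^ (-(m - 1) - 1)) r := fun r hr =>
    (hFd r).rpow_const (Or.inl (hFpos r hr).ne')
  have hmv := (convex_Icc 0 t).mul_sub_le_image_sub_of_le_deriv
    (f := fun r => F r ^ (-(m - 1))) (C := C * (m - 1))
    (fun x hx => (hGd x hx.2).continuousAt.continuousWithinAt)
    (fun x hx => (hGd x (interior_subset hx).2).differentiableAt.differentiableWithinAt)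
    (by
      intro x hx
      have hx := interior_subset hx
      rw [(hGd x hx.2).deriv]
      have hp := hFpos x hx.2
      have e : F x ^ m * F x ^ (-(m - 1) - 1) = 1 := by
        rw [← Real.rpow_add hp]; ring_nf; exact Real.rpow_zero _
      have l : F x ^ m ≤ h x := by
        simp only [hh, max_eq_left hx.1]
        exact Real.rpow_le_rpow hp.le (hFle x hx.1 hx.2) (by linarith)
      have l2 := mul_le_mul_of_nonneg_right l (Real.rpow_nonneg hp.le (-(m - 1) - 1))
      rw [e] at l2
      have hc : 0 ≤ C * (m - 1) := mul_nonneg hC.le (by linarith)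
      have l3 := mul_le_mul_of_nonneg_left l2 hc
      linarith)
    0 ⟨le_rfl, ht⟩ t ⟨ht, le_rfl⟩ ht
  simp only [hFt, sub_zero] at hmv
  have l0 : f 0 ^ (-(m - 1)) ≤ F 0 ^ (-(m - 1)) :=
    Real.rpow_le_rpow_of_nonpos (hFpos 0 ht) (hFle 0 le_rfl ht) (by linarith)
  linarith

theorem decay_inv (m x B : ℝ) (hm : 1 < m) (hx : 0 < x) (hB : 0 < B)
    (h : B ≤ x ^ (-(m - 1))) : x ≤ B ^ (-(1 / (m - 1))) := by
  have hm' : m - 1 ≠ 0 := by linarith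
  have h1 : (x ^ (-(m - 1))) ^ (-(1 / (m - 1))) = x := by
    rw [← Real.rpow_mul hx.le]
    have : -(m - 1) * -(1 / (m - 1)) = 1 := by field_simp
    rw [this, Real.rpow_one]
  have h2 : 0 ≤ 1 / (m - 1) := one_div_nonneg.2 (by linarith)
  calc x = _ := h1.symm
    _ ≤ _ := Real.rpow_le_rpow_of_nonpos hB h (by linarith)

/-- Uniform-in-initial-condition polynomial decay: if `f : [0,∞) → [0,∞)` is continuous and
satisfies `f(t) - f(s) ≤ -C ∫_s^t f^m` for all `0 ≤ s ≤ t` (with `m > 1`, `C > 0`), then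
`f(t) ≤ (C(m-1)t)^{-1/(m-1)}` for `t > 0`, and if `f(0) > 0` then
`f(t) ≤ (f(0)^{-(m-1)} + C(m-1)t)^{-1/(m-1)}` for all `t ≥ 0`. -/
theorem polynomial_decay (m C : ℝ) (hm : 1 < m) (hC : 0 < C)
    (f : ℝ → ℝ) (hfc : ContinuousOn f (Set.Ici 0))
    (hfnonneg : ∀ t : ℝ, 0 ≤ t → 0 ≤ f t)
    (hf : ∀ s t : ℝ, 0 ≤ s → s ≤ t → f t - f s ≤ -C * ∫ τ in s..t, f τ ^ m) :
    (∀ t : ℝ, 0 < t → f t ≤ (C * (m - 1) * t) ^ (-(1 / (m - 1)))) ∧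
    (0 < f 0 → ∀ t : ℝ, 0 ≤ t →
      f t ≤ (f 0 ^ (-(m - 1)) + C * (m - 1) * t) ^ (-(1 / (m - 1)))) := by
  have hm1 : 0 < m - 1 := by linarith
  constructor
  · intro t ht
    have hB : 0 < C * (m - 1) * t := by positivity
    rcases (hfnonneg t ht.le).eq_or_lt with h0 | h0
    · rw [← h0]; exact Real.rpow_nonneg hB.le _
    · obtain ⟨h1, h2⟩ := decay_key m C hm hC f hfc hfnonneg hf t ht.le h0
      have h3 := Real.rpow_pos_of_pos h1 (-(m - 1))
      exact decay_inv m _ _ hm h0 hB (by linarith)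
  · intro hf0 t ht
    have h3 := Real.rpow_pos_of_pos hf0 (-(m - 1))
    have hB : 0 < f 0 ^ (-(m - 1)) + C * (m - 1) * t := by positivity
    rcases (hfnonneg t ht).eq_or_lt with h0 | h0
    · rw [← h0]; exact Real.rpow_nonneg hB.le _
    · exact decay_inv m _ _ hm h0 hB (decay_key m C hm hC f hfc hfnonneg hf t ht h0).2
end

section
/- Let q > 1 and C₁, C₂, C₃ > 0. There exists a constant C > 0, depending only on q, C₁, C₂, C₃, such that every differentiable function f : [0, ∞) → [0, ∞) satisfying f′(t) ≤ −C₁ f(t)^q + C₂ f(t) + C₃ for all t ≥ 0 obeys the bound f(t) ≤ C (t ∧ 1)^{−1/(q−1)} for every t > 0; in particular the bound is uniform in the initial value f(0). -/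
/-- "Coming down from infinity" differential inequality estimate: for `q > 1` and
`C₁, C₂, C₃ > 0` there is `C > 0` (depending only on `q, C₁, C₂, C₃`) such that every
nonnegative differentiable `f` on `[0,∞)` with `f' ≤ -C₁ f^q + C₂ f + C₃` satisfies
`f(t) ≤ C (t ∧ 1)^{-1/(q-1)}` for every `t > 0`, uniformly in `f(0)`. -/
theorem coming_down_from_infinity (q C₁ C₂ C₃ : ℝ) (hq : 1 < q)
    (h1 : 0 < C₁) (h2 : 0 < C₂) (h3 : 0 < C₃) :
    ∃ C : ℝ, 0 < C ∧ ∀ f f' : ℝ → ℝ,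
      (∀ t : ℝ, 0 ≤ t → 0 ≤ f t) →
      (∀ t : ℝ, 0 ≤ t → HasDerivWithinAt f (f' t) (Set.Ici 0) t) →
      (∀ t : ℝ, 0 ≤ t → f' t ≤ -C₁ * f t ^ q + C₂ * f t + C₃) →
      ∀ t : ℝ, 0 < t → f t ≤ C * (min t 1) ^ (-(1 / (q - 1))) := by
  have hq1 : 0 < q - 1 := by linarith
  obtain ⟨M, hM1, hM⟩ : ∃ M : ℝ, 1 ≤ M ∧ ∀ x, M ≤ x → C₂ * x + C₃ ≤ C₁ / 2 * x ^ q := by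
    have hK : 0 ≤ 2 * (C₂ + C₃) / C₁ := by positivity
    refine ⟨max 1 ((2 * (C₂ + C₃) / C₁) ^ (1 / (q - 1))), le_max_left _ _, fun x hx => ?_⟩
    have hx1 : 1 ≤ x := (le_max_left _ _).trans hx
    have hx2 := (le_max_right _ _).trans hx
    have h4 : 2 * (C₂ + C₃) / C₁ ≤ x ^ (q - 1) := by
      have := Real.rpow_le_rpow (by positivity) hx2 hq1.le
      rwa [← Real.rpow_mul hK, one_div_mul_cancel hq1.ne', Real.rpow_one] at this
    have h5 : x ^ q = x ^ (q - 1) * x := by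
      rw [Real.rpow_sub_one (by positivity)]
      field_simp
    rw [div_le_iff₀ h1] at h4
    rw [h5]
    nlinarith [mul_le_mul_of_nonneg_right h4 (by linarith : (0:ℝ) ≤ x),
      mul_le_mul_of_nonneg_left hx1 h3.le]
  obtain ⟨a, ha⟩ : ∃ a, a = (q - 1) * (C₁ / 2) := ⟨_, rfl⟩
  have ha0 : 0 < a := by rw [ha]; positivity
  refine ⟨M + a ^ (-(1 / (q - 1))), by positivity, fun f f' hf hd hi T hT => ?_⟩
  have hm0 : 0 < min T 1 := lt_min hT one_pos
  have hneg : -(1 / (q - 1)) ≤ 0 := by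
    have : 0 < 1 / (q - 1) := by positivity
    linarith
  have hr1 : 1 ≤ (min T 1) ^ (-(1 / (q - 1))) :=
    Real.one_le_rpow_of_pos_of_le_one_of_nonpos hm0 (min_le_right _ _) hneg
  have hA : 0 < a ^ (-(1 / (q - 1))) := by positivity
  rcases le_or_gt (f T) M with hle | hgt
  · nlinarith
  have hcont : ∀ s, 0 ≤ s → ContinuousOn f (Set.Icc s T) := fun s hs x hx =>
    ((hd x (hs.trans hx.1)).continuousWithinAt).mono
      (fun y hy => hs.trans hy.1)
  have hder : ∀ x, 0 ≤ x → HasDerivWithinAt f (f' x) (Set.Ici x) x := fun x hx =>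
    (hd x hx).mono (Set.Ici_subset_Ici.2 hx)
  have hbig : ∀ s ∈ Set.Icc 0 T, M < f s := by
    intro s hs
    by_contra! hsM
    have := image_le_of_deriv_right_lt_deriv_boundary (B := fun _ => M) (B' := fun _ => 0)
      (hcont s hs.1) (fun x hx => hder x (hs.1.trans hx.1)) hsM
      (fun x => hasDerivAt_const x M) (fun x hx hxM => by
        have e1 := hi x (hs.1.trans hx.1)
        have e2 := hM (f x) (by rw [hxM])
        have e3 : 0 < f x ^ q := Real.rpow_pos_of_pos (by rw [hxM]; linarith) q
        nlinarith [mul_pos h1 e3]) (x := T) ⟨hs.2, le_rfl⟩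
    linarith
  have hpos : ∀ s ∈ Set.Icc 0 T, 0 < f s := fun s hs => by linarith [hbig s hs]
  have hg : a * T ≤ f T ^ (1 - q) := by
    refine image_le_of_deriv_right_le_deriv_boundary (f := fun s => a * s) (f' := fun _ => a)
      (B := fun s => f s ^ (1 - q)) (B' := fun s => f' s * (1 - q) * f s ^ (1 - q - 1))
      (a := 0) (b := T) (by fun_prop) (fun x hx => ?_) ?_ ?_ (fun x hx => ?_) (fun x hx => ?_)
      ⟨hT.le, le_rfl⟩
    · simpa using ((hasDerivAt_id x).const_mul a).hasDerivWithinAt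
    · simpa using (Real.rpow_pos_of_pos (hpos 0 ⟨le_rfl, hT.le⟩) (1 - q)).le
    · exact (hcont 0 le_rfl).rpow_const (fun x hx => Or.inl (hpos x hx).ne')
    · exact (hder x hx.1).rpow_const (Or.inl (hpos x ⟨hx.1, hx.2.le⟩).ne')
    · have hx' : x ∈ Set.Icc 0 T := ⟨hx.1, hx.2.le⟩
      have e1 := hi x hx.1
      have e2 := hM (f x) (hbig x hx').le
      have e3 : f x ^ q * f x ^ (1 - q - 1) = 1 := by
        rw [← Real.rpow_add (hpos x hx')]
        simp
      have e4 : 0 < f x ^ (1 - q - 1) := Real.rpow_pos_of_pos (hpos x hx') _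
      have e5 : C₁ / 2 * f x ^ q ≤ - f' x := by linarith
      have e6 := mul_le_mul_of_nonneg_left (mul_le_mul_of_nonneg_right e5 e4.le) hq1.le
      have e7 : (q - 1) * (C₁ / 2 * f x ^ q * f x ^ (1 - q - 1)) = a := by
        rw [mul_assoc, e3, ha, mul_one]
      rw [e7] at e6
      linarith
  have hfT : f T ≤ (a * T) ^ (-(1 / (q - 1))) := by
    have e := Real.rpow_le_rpow_of_nonpos (mul_pos ha0 hT) hg hneg
    rw [← Real.rpow_mul (hf T hT.le)] at e
    have : (1 - q) * -(1 / (q - 1)) = 1 := by field_simp; ring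
    rwa [this, Real.rpow_one] at e
  have hT1 : T ^ (-(1 / (q - 1))) ≤ (min T 1) ^ (-(1 / (q - 1))) :=
    Real.rpow_le_rpow_of_nonpos hm0 (min_le_left _ _) hneg
  rw [Real.mul_rpow ha0.le hT.le] at hfT
  have := mul_le_mul_of_nonneg_left hT1 hA.le
  nlinarith
end

section
/- Let m > 1, K ≥ 1, λ ≥ 0 and R ∈ (0, ∞). Let 𝔞, ã : [0, ∞) → ℝ be measurable functions satisfying |𝔞(s)| ≤ K(1 + s^{(m−1)/2}) and |ã(s)| ≤ K(1 + s^{(m−1)/2}) for all s ≥ 0, and |𝔞(s) − ã(s)| ≤ λ for all s ∈ [0, R]. Define A(r) := sgn(r) ∫_0^{|r|} 𝔞(s)² ds and Ã(r) := sgn(r) ∫_0^{|r|} ã(s)² ds for r ∈ ℝ. Then there exists a constant C > 0, depending only on K and m, such that for every r ∈ ℝ: |A(r) − Ã(r)| ≤ C ( λ(1 + |r|^{(m+1)/2}) + 𝟙_{|r| ≥ R}(1 + |r|^m) ), where 𝟙_{|r| ≥ R} equals 1 if |r| ≥ R and 0 otherwise. -/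
theorem aux_int (f : ℝ → ℝ) (hf : Measurable f) (ρ B : ℝ) (hρ : 0 ≤ ρ)
    (h : ∀ s ∈ Set.Ioc 0 ρ, |f s| ≤ B) :
    IntervalIntegrable (fun s => (f s) ^ 2) MeasureTheory.volume 0 ρ := by
  rw [intervalIntegrable_iff_integrableOn_Ioc_of_le hρ]
  refine MeasureTheory.IntegrableOn.of_bound (C := B ^ 2) (by simp)
    (hf.pow_const 2).aestronglyMeasurable ?_
  refine (MeasureTheory.ae_restrict_iff' measurableSet_Ioc).2 (Filter.Eventually.of_forall ?_)
  intro s hs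
  rw [Real.norm_eq_abs, abs_pow]
  exact pow_le_pow_left₀ (abs_nonneg _) (h s hs) 2

theorem aux_pow (ρ q : ℝ) (hρ : 0 ≤ ρ) (hq : 1 ≤ q) : ρ ≤ 1 + ρ ^ q := by
  rcases le_total ρ 1 with h | h
  · have := Real.rpow_nonneg hρ q
    linarith
  · have := Real.rpow_le_rpow_of_exponent_le h hq
    rw [Real.rpow_one] at this
    linarith

/-- Estimate on the difference of two porous-medium-type nonlinearities
`A(r) = sgn(r) ∫_0^{|r|} 𝔞(s)² ds` and `Ã(r) = sgn(r) ∫_0^{|r|} ã(s)² ds`, where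
`𝔞, ã` have `(m-1)/2`-growth (constant `K`) and are `λ`-close on `[0, R]`:
`|A(r) − Ã(r)| ≤ C(λ(1 + |r|^{(m+1)/2}) + 𝟙_{|r| ≥ R}(1 + |r|^m))` with `C = C(K, m)`. -/
theorem nonlinearity_difference_estimate (m K : ℝ) (hm : 1 < m) (hK : 1 ≤ K) :
    ∃ C : ℝ, 0 < C ∧ ∀ (lam R : ℝ), 0 ≤ lam → 0 < R →
      ∀ a ta : ℝ → ℝ, Measurable a → Measurable ta →
      (∀ s : ℝ, 0 ≤ s → |a s| ≤ K * (1 + s ^ ((m - 1) / 2))) →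
      (∀ s : ℝ, 0 ≤ s → |ta s| ≤ K * (1 + s ^ ((m - 1) / 2))) →
      (∀ s ∈ Set.Icc (0 : ℝ) R, |a s - ta s| ≤ lam) →
      ∀ r : ℝ,
        |Real.sign r * (∫ s in (0 : ℝ)..|r|, (a s) ^ 2) -
            Real.sign r * (∫ s in (0 : ℝ)..|r|, (ta s) ^ 2)| ≤
          C * (lam * (1 + |r| ^ ((m + 1) / 2)) +
            (if R ≤ |r| then (1 : ℝ) else 0) * (1 + |r| ^ m)) := by
  refine ⟨4 * K ^ 2, by positivity, ?_⟩
  intro lam R hlam hR a ta ha hta hab htab hd r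
  have hρ : 0 ≤ |r| := abs_nonneg r
  generalize |r| = ρ at hρ
  have hp0 : 0 ≤ ρ ^ ((m - 1) / 2) := Real.rpow_nonneg hρ _
  have hB : ∀ f : ℝ → ℝ, (∀ s : ℝ, 0 ≤ s → |f s| ≤ K * (1 + s ^ ((m - 1) / 2))) →
      ∀ s ∈ Set.Ioc 0 ρ, |f s| ≤ K * (1 + ρ ^ ((m - 1) / 2)) := by
    intro f hf s hs
    refine (hf s hs.1.le).trans ?_
    have := Real.rpow_le_rpow hs.1.le hs.2 (by linarith : 0 ≤ (m - 1) / 2)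
    gcongr
  have h1 := hB a hab
  have h2 := hB ta htab
  rw [← mul_sub, ← intervalIntegral.integral_sub (aux_int a ha ρ _ hρ h1)
    (aux_int ta hta ρ _ hρ h2), abs_mul]
  have hsg : |Real.sign r| ≤ 1 := by
    rcases Real.sign_apply_eq r with h | h | h <;> simp [h]
  refine (mul_le_of_le_one_left (abs_nonneg _) hsg).trans ?_
  have key : ∀ M, (∀ s ∈ Set.Ioc 0 ρ, |a s ^ 2 - ta s ^ 2| ≤ M) →
      |∫ s in (0 : ℝ)..ρ, (a s ^ 2 - ta s ^ 2)| ≤ M * ρ := by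
    intro M hM
    have := intervalIntegral.norm_integral_le_of_norm_le_const (a := 0) (b := ρ)
      (f := fun s => a s ^ 2 - ta s ^ 2) (C := M)
      (by rw [Set.uIoc_of_le hρ]; exact hM)
    rwa [sub_zero, abs_of_nonneg hρ, Real.norm_eq_abs] at this
  have e1 : ρ ^ ((m - 1) / 2) * ρ = ρ ^ ((m + 1) / 2) := by
    rw [← Real.rpow_add_one' hρ (by linarith)]
    congr 1; ring
  have e2 : (ρ ^ ((m - 1) / 2)) ^ 2 * ρ = ρ ^ m := by
    rw [← Real.rpow_mul_natCast hρ, ← Real.rpow_add_one' hρ (by push_cast; linarith)]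
    congr 1; push_cast; ring
  have b1 := aux_pow ρ ((m + 1) / 2) hρ (by linarith)
  have b2 := aux_pow ρ m hρ hm.le
  have n1 := Real.rpow_nonneg hρ ((m + 1) / 2)
  have n2 := Real.rpow_nonneg hρ m
  generalize ρ ^ ((m - 1) / 2) = P at *
  generalize ρ ^ ((m + 1) / 2) = Q at *
  generalize ρ ^ m = S at *
  split_ifs with hRr
  · refine (key (K ^ 2 * (1 + P) ^ 2) ?_).trans ?_
    · intro s hs
      have u1 := pow_le_pow_left₀ (abs_nonneg _) (h1 s hs) 2
      have u2 := pow_le_pow_left₀ (abs_nonneg _) (h2 s hs) 2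
      rw [sq_abs, mul_pow] at u1 u2
      rw [abs_le]
      constructor <;> nlinarith [sq_nonneg (a s), sq_nonneg (ta s)]
    · have v : (1 + P) ^ 2 * ρ ≤ 4 * (1 + S) := by
        nlinarith [mul_nonneg (sq_nonneg (1 - P)) hρ]
      have w : 0 ≤ lam * (1 + Q) := by positivity
      calc K ^ 2 * (1 + P) ^ 2 * ρ = K ^ 2 * ((1 + P) ^ 2 * ρ) := by ring
        _ ≤ K ^ 2 * (4 * (1 + S)) := by gcongr
        _ ≤ K ^ 2 * (4 * (lam * (1 + Q) + 1 * (1 + S))) :=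
          mul_le_mul_of_nonneg_left (by linarith) (sq_nonneg K)
        _ = _ := by ring
  · refine (key (lam * (2 * (K * (1 + P)))) ?_).trans ?_
    · intro s hs
      have u := hd s ⟨hs.1.le, hs.2.trans (not_le.1 hRr).le⟩
      have t : |a s + ta s| ≤ 2 * (K * (1 + P)) :=
        (abs_add_le _ _).trans (by linarith [h1 s hs, h2 s hs])
      rw [show a s ^ 2 - ta s ^ 2 = (a s - ta s) * (a s + ta s) by ring, abs_mul]
      exact mul_le_mul u t (abs_nonneg _) hlam
    · have v : (1 + P) * ρ ≤ 2 * (1 + Q) := by nlinarith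
      have hKK : K ≤ K ^ 2 := by nlinarith
      calc lam * (2 * (K * (1 + P))) * ρ = 2 * lam * K * ((1 + P) * ρ) := by ring
        _ ≤ 2 * lam * K ^ 2 * (2 * (1 + Q)) := by gcongr
        _ = _ := by ring
end

section
/- Let m > 1 and K ≥ 1, and let A : ℝ → ℝ be differentiable, strictly increasing and odd, such that 𝔞 := √(A′) is differentiable away from the origin and satisfies: |𝔞(0)| ≤ K; |𝔞′(r)| ≤ K r^{(m−3)/2} for all r > 0; K𝔞(r) ≥ 1 whenever |r| ≥ 1; and, with [𝔞](r) := ∫_0^r 𝔞(ζ) dζ, K|[𝔞](r) − [𝔞](r̃)| ≥ |r − r̃| whenever |r| ∨ |r̃| ≥ 1 and K|[𝔞](r) − [𝔞](r̃)| ≥ |r − r̃|^{(m+1)/2} whenever |r| ∨ |r̃| < 1. Then for every integer n ≥ 1 there exists an increasing, infinitely differentiable function Aₙ : ℝ → ℝ with bounded derivatives which satisfies all of the above conditions with K replaced by 3K, and such that, with 𝔞ₙ := √(Aₙ′), one has 𝔞ₙ(r) ≥ 2/n for every r ∈ ℝ and sup_{|r| ≤ n} |𝔞(r) − 𝔞ₙ(r)|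 ≤ 4/n. -/
open intervalIntegral

/-- Assumption 2.1(a) of the paper with constant `K`: `A` is strictly increasing, odd and
differentiable with `A' = 𝔞²` for the nonnegative function `𝔞 = √(A')`, `𝔞` is differentiable
away from the origin with derivative `𝔞'`, and the stated bounds with constant `K` hold, where
`[𝔞](r) = ∫_0^r 𝔞`. -/
def SatisfiesAssumptionA (m K : ℝ) (A a a' : ℝ → ℝ) : Prop :=
  StrictMono A ∧
  (∀ r : ℝ, A (-r) = -A r) ∧
  (∀ r : ℝ, 0 ≤ a r) ∧
  (∀ r : ℝ, HasDerivAt A ((a r) ^ 2) r) ∧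
  (∀ r : ℝ, r ≠ 0 → HasDerivAt a (a' r) r) ∧
  |a 0| ≤ K ∧
  (∀ r : ℝ, 0 < r → |a' r| ≤ K * r ^ ((m - 3) / 2)) ∧
  (∀ r : ℝ, 1 ≤ |r| → 1 ≤ K * a r) ∧
  (∀ r rt : ℝ, 1 ≤ max |r| |rt| →
    |r - rt| ≤ K * |(∫ ζ in (0 : ℝ)..r, a ζ) - ∫ ζ in (0 : ℝ)..rt, a ζ|) ∧
  (∀ r rt : ℝ, max |r| |rt| < 1 →
    |r - rt| ^ ((m + 1) / 2) ≤ K * |(∫ ζ in (0 : ℝ)..r, a ζ) - ∫ ζ in (0 : ℝ)..rt, a ζ|)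


open Set Filter Topology MeasureTheory
open scoped Convolution

lemma smoothing (b : ℝ → ℝ) (hb : Continuous b) (ε : ℝ) (hε : 0 < ε) :
    ∃ f : ℝ → ℝ, ContDiff ℝ (⊤ : ℕ∞) f ∧
      ((∀ x, b (-x) = b x) → ∀ x, f (-x) = f x) ∧
      ((∀ x, 0 ≤ b x) → ∀ x, 0 ≤ f x) ∧
      (∀ x η, (∀ y, |y - x| < ε → |b y - b x| ≤ η) → |f x - b x| ≤ η) ∧
      (∀ r y C, (∀ t, |t| < ε → |b (y - t) - b (r - t)| ≤ C) → |f y - f r| ≤ C) := by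
  let φ : ContDiffBump (0 : ℝ) := ⟨ε / 2, ε, by linarith, by linarith⟩
  have hint : ∀ x, Integrable (fun t => φ.normed volume t * b (x - t)) := by
    intro x
    apply Continuous.integrable_of_hasCompactSupport
    · exact (φ.contDiff_normed (n := 0)).continuous.mul (hb.comp (by fun_prop))
    · exact φ.hasCompactSupport_normed.mul_right
  let f : ℝ → ℝ := fun x => ∫ t, φ.normed volume t * b (x - t)
  have hf : f = φ.normed volume ⋆[ContinuousLinearMap.lsmul ℝ ℝ, volume] b := by
    ext x; simp [f, convolution_def]
  have hsupp : ∀ t, φ.normed volume t ≠ 0 → |t| < ε := by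
    intro t ht
    have : t ∈ Function.support (φ.normed volume) := ht
    rw [φ.support_normed_eq] at this
    simpa [φ] using this
  have h1 : ∫ t, φ.normed volume t = 1 := φ.integral_normed
  have hφint : Integrable (φ.normed volume) := φ.integrable_normed
  have key : ∀ (g : ℝ → ℝ) (C : ℝ), (∀ t, |t| < ε → |g t| ≤ C) →
      |∫ t, φ.normed volume t * g t| ≤ C := by
    intro g C h
    have := norm_integral_le_of_norm_le (μ := volume) (f := fun t => φ.normed volume t * g t)
      (g := fun t => φ.normed volume t * C) (hφint.mul_const C) (ae_of_all _ (fun t => by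
        rw [norm_mul, Real.norm_eq_abs, Real.norm_eq_abs, abs_of_nonneg (φ.nonneg_normed t)]
        by_cases h0 : φ.normed volume t = 0
        · simp [h0]
        · exact mul_le_mul_of_nonneg_left (h t (hsupp t h0)) (φ.nonneg_normed t)))
    rw [MeasureTheory.integral_mul_const, h1, one_mul] at this
    exact this
  refine ⟨f, ?_, ?_, ?_, ?_, ?_⟩
  · rw [hf]
    exact φ.hasCompactSupport_normed.contDiff_convolution_left _ φ.contDiff_normed
      hb.locallyIntegrable
  · intro he x
    simp only [f]
    rw [← integral_neg_eq_self]
    congr 1; ext t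
    rw [φ.normed_neg, ← he]
    congr 2; ring
  · intro h0 x
    exact integral_nonneg fun t => mul_nonneg (φ.nonneg_normed t) (h0 _)
  · intro x η h
    have : f x - b x = ∫ t, φ.normed volume t * (b (x - t) - b x) := by
      simp only [mul_sub]
      rw [integral_sub (hint x) (hφint.mul_const _), MeasureTheory.integral_mul_const, h1, one_mul]
    rw [this]
    apply key
    intro t ht
    apply h
    simpa using ht
  · intro r y C h
    have : f y - f r = ∫ t, φ.normed volume t * (b (y - t) - b (r - t)) := by
      simp only [mul_sub]
      rw [integral_sub (hint y) (hint r)]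
    rw [this]
    exact key _ _ h

lemma a_even {A a : ℝ → ℝ} (hodd : ∀ r : ℝ, A (-r) = -A r) (h0 : ∀ r, 0 ≤ a r)
    (hd : ∀ r : ℝ, HasDerivAt A ((a r) ^ 2) r) (r : ℝ) : a (-r) = a r := by
  have h1 : HasDerivAt (fun x => A (-x)) (-(a (-r))^2) r := by
    have := (hd (-r)).scomp r (hasDerivAt_neg r)
    simpa [Function.comp_def] using this
  have h2 : HasDerivAt (fun x => A (-x)) (-(a r)^2) r := by
    simp only [hodd]; exact (hd r).neg
  have := h1.unique h2
  exact (pow_left_inj₀ (h0 _) (h0 _) two_ne_zero).1 (by linarith)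

lemma a_cont {m K : ℝ} (hm : 1 < m) {A a a' : ℝ → ℝ} (hodd : ∀ r : ℝ, A (-r) = -A r)
    (h0 : ∀ r, 0 ≤ a r) (hd : ∀ r : ℝ, HasDerivAt A ((a r) ^ 2) r)
    (hda : ∀ r : ℝ, r ≠ 0 → HasDerivAt a (a' r) r)
    (hb : ∀ r : ℝ, 0 < r → |a' r| ≤ K * r ^ ((m - 3) / 2)) : Continuous a := by
  have he := a_even hodd h0 hd
  set q := (m - 1) / 2 with hq
  have hq0 : 0 < q := by rw [hq]; linarith
  have hder : ∀ x : ℝ, 0 < x → HasDerivAt (fun x : ℝ => K / q * x ^ q) (K * x ^ ((m-3)/2)) x := by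
    intro x hx
    have := (Real.hasDerivAt_rpow_const (p := q) (Or.inl hx.ne')).const_mul (K / q)
    refine this.congr_deriv ?_
    have : q - 1 = (m-3)/2 := by rw [hq]; ring
    rw [this]; field_simp
  have hmon : ∀ s : ℝ, |s| = 1 → MonotoneOn (fun x : ℝ => K / q * x ^ q + s * a x) (Ioi 0) := by
    intro s hs
    have hD : ∀ x ∈ Ioi (0:ℝ), HasDerivAt (fun x : ℝ => K / q * x ^ q + s * a x)
        (K * x ^ ((m-3)/2) + s * a' x) x := fun x hx =>
      (hder x hx).add ((hda x (ne_of_gt hx)).const_mul s)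
    apply monotoneOn_of_deriv_nonneg (convex_Ioi 0)
    · exact fun x hx => (hD x hx).continuousAt.continuousWithinAt
    · rw [interior_Ioi]; exact fun x hx => (hD x hx).differentiableAt.differentiableWithinAt
    · rw [interior_Ioi]; intro x hx
      rw [(hD x hx).deriv]
      have h1 := hb x hx
      have h2 : |s * a' x| ≤ K * x ^ ((m - 3) / 2) := by rw [abs_mul, hs, one_mul]; exact h1
      linarith [(abs_le.1 h2).1]
  have hK0 : 0 ≤ K := by
    have := (abs_nonneg _).trans (hb 1 one_pos); simpa using this
  have hhol : ∀ x y : ℝ, 0 < x → x ≤ y → |a y - a x| ≤ K / q * y ^ q := by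
    intro x y hx hxy
    have h1 := hmon 1 (by simp) (mem_Ioi.2 hx) (mem_Ioi.2 (hx.trans_le hxy)) hxy
    have h2 := hmon (-1) (by simp) (mem_Ioi.2 hx) (mem_Ioi.2 (hx.trans_le hxy)) hxy
    simp only at h1 h2
    have : 0 ≤ K / q * x ^ q := by positivity
    rw [abs_le]; constructor <;> linarith
  have hA0 : A 0 = 0 := by have := hodd 0; simp at this; linarith
  have hbound : ∀ x : ℝ, 0 < x → |a x - √(A x / x)| ≤ K / q * x ^ q := by
    intro x hx
    obtain ⟨c, hc, hce⟩ := exists_hasDerivAt_eq_slope A (fun r => (a r)^2) hx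
      (fun y _ => (hd y).continuousAt.continuousWithinAt) (fun y _ => hd y)
    rw [hA0, sub_zero, sub_zero] at hce
    rw [← hce, Real.sqrt_sq (h0 c)]
    exact hhol c x hc.1 hc.2.le
  have hslope : Tendsto (fun x => √(A x / x)) (𝓝[>] 0) (𝓝 (a 0)) := by
    have h1 := (hasDerivAt_iff_tendsto_slope.1 (hd 0)).mono_left
      (nhdsWithin_mono 0 (fun x (hx : x ∈ Ioi (0:ℝ)) => ne_of_gt hx))
    have h2 := (Real.continuous_sqrt.tendsto _).comp h1
    rw [Real.sqrt_sq (h0 0)] at h2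
    refine h2.congr fun x => ?_
    simp [slope_def_field, hA0]
  have hpow : Tendsto (fun x : ℝ => K / q * x ^ q) (𝓝[>] 0) (𝓝 0) := by
    have : ContinuousAt (fun x : ℝ => K / q * x ^ q) 0 :=
      (Real.continuousAt_rpow_const 0 q (Or.inr hq0.le)).const_mul _
    have := this.tendsto.mono_left (nhdsWithin_le_nhds (s := Ioi 0))
    simpa [Real.zero_rpow hq0.ne'] using this
  have hdiff : Tendsto (fun x => a x - √(A x / x)) (𝓝[>] 0) (𝓝 0) := by
    apply squeeze_zero_norm' _ hpow
    filter_upwards [self_mem_nhdsWithin] with x hx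
    exact hbound x hx
  have hright : Tendsto a (𝓝[>] 0) (𝓝 (a 0)) := by
    have := hdiff.add hslope
    simpa using this
  have hleft : Tendsto a (𝓝[<] 0) (𝓝 (a 0)) := by
    have h1 : Tendsto (fun x : ℝ => -x) (𝓝[<] 0) (𝓝[>] 0) := by
      have := tendsto_neg_nhdsLT (a := (0:ℝ)); simpa using this
    refine (hright.comp h1).congr fun x => he x
  rw [continuous_iff_continuousAt]
  intro x
  by_cases hx : x = 0
  · subst hx
    rw [continuousAt_iff_punctured_nhds, ← nhdsLT_sup_nhdsGT]
    exact hleft.sup hright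
  · exact (hda x hx).continuousAt

lemma a_lip {m K : ℝ} {a a' : ℝ → ℝ}
    (hda : ∀ r : ℝ, r ≠ 0 → HasDerivAt a (a' r) r)
    (hb : ∀ r : ℝ, 0 < r → |a' r| ≤ K * r ^ ((m - 3) / 2)) (hK : 0 ≤ K) (u v C : ℝ) (hu : 0 < u)
    (hC : ∀ s ∈ Icc u v, s ^ ((m - 3) / 2) ≤ C) (x y : ℝ) (hx : x ∈ Icc u v) (hy : y ∈ Icc u v) :
    |a x - a y| ≤ K * C * |x - y| := by
  have := (convex_Icc u v).norm_image_sub_le_of_norm_hasDerivWithin_le (f := a) (f' := a')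
    (C := K * C) (fun z hz => (hda z (by linarith [hz.1] : 0 < z).ne').hasDerivWithinAt)
    (fun z hz => (hb z (by linarith [hz.1])).trans (mul_le_mul_of_nonneg_left (hC z hz) hK)) hy hx
  simpa using this

lemma smooth_bdd (g : ℝ → ℝ) (hg : ContDiff ℝ (⊤ : ℕ∞) g) (c R : ℝ)
    (h : ∀ x, R ≤ |x| → g x = c) (j : ℕ) : ∃ M : ℝ, ∀ r, |iteratedDeriv j g r| ≤ M := by
  have hcs : HasCompactSupport (fun x => g x - c) := by
    apply HasCompactSupport.of_support_subset_isCompact (isCompact_Icc (a := -R) (b := R))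
    intro x hx
    by_contra hn
    apply hx
    have : R ≤ |x| := by
      by_contra hlt
      exact hn (abs_le.1 (not_le.1 hlt).le)
    simp [h x this]
  have key : ∀ j : ℕ, ∀ f : ℝ → ℝ, ContDiff ℝ (⊤ : ℕ∞) f → HasCompactSupport f →
      ∃ M : ℝ, ∀ r, |iteratedDeriv j f r| ≤ M := by
    intro j
    induction j with
    | zero =>
      intro f hf hc
      obtain ⟨M, hM⟩ := hc.exists_bound_of_continuous hf.continuous
      exact ⟨M, by simpa using hM⟩
    | succ j ih =>
      intro f hf hc
      rw [iteratedDeriv_succ']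
      exact ih _ ((contDiff_infty_iff_deriv.1 hf).2) hc.deriv
  cases j with
  | zero =>
    obtain ⟨M, hM⟩ := key 0 _ (hg.sub contDiff_const) hcs
    refine ⟨M + |c|, fun r => ?_⟩
    have := hM r
    simp only [iteratedDeriv_zero] at this ⊢
    have h2 := abs_add_le (g r - c) c
    simp at h2; linarith
  | succ j =>
    obtain ⟨M, hM⟩ := key (j+1) _ (hg.sub contDiff_const) hcs
    refine ⟨M, fun r => ?_⟩
    have := hM r
    rw [iteratedDeriv_succ'] at this ⊢
    simpa using this

lemma core (m K : ℝ) (hK : 1 ≤ K) (a a' : ℝ → ℝ)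
    (hcont : Continuous a) (he : ∀ r, a (-r) = a r) (h0 : ∀ r, 0 ≤ a r)
    (hda : ∀ r : ℝ, r ≠ 0 → HasDerivAt a (a' r) r) (ha0 : a 0 ≤ K)
    (hb : ∀ r : ℝ, 0 < r → |a' r| ≤ K * r ^ ((m - 3) / 2))
    (h1 : ∀ r : ℝ, 1 ≤ |r| → 1 ≤ K * a r) (N : ℝ) (hN : 1 ≤ N) :
    ∃ f : ℝ → ℝ, ContDiff ℝ (⊤ : ℕ∞) f ∧ (∀ r, f (-r) = f r) ∧ (∀ r, 2 / N ≤ f r) ∧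
      f 0 ≤ 3 * K ∧ (∀ r : ℝ, 0 < r → |deriv f r| ≤ 3 * K * r ^ ((m - 3) / 2)) ∧
      (∀ r, |r| ≤ N → |a r - f r| ≤ 4 / N) ∧ (∀ r, |r| ≤ N → a r ≤ f r) ∧
      (∀ r, 1 ≤ |r| → 1 ≤ K * f r) ∧ (∃ c R, ∀ r, R ≤ |r| → f r = c) := by
  have hN0 : 0 < N := by linarith
  have hK0 : 0 < K := by linarith
  have habs : ∀ r, a |r| = a r := by
    intro r; rcases abs_choice r with h | h <;> rw [h]; exact he r
  -- bound
  obtain ⟨M, hM⟩ := (isCompact_Icc (a := (0:ℝ)) (b := N)).exists_bound_of_continuousOn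
    hcont.continuousOn
  have hM' : ∀ x, 0 ≤ x → x ≤ N → a x ≤ M := fun x hx hx' =>
    (le_abs_self _).trans (hM x ⟨hx, hx'⟩)
  have hM0 : 0 ≤ M := (h0 0).trans (hM' 0 le_rfl hN0.le)
  set η : ℝ := 1 / (N * (1 + M)) with hη
  have hη0 : 0 < η := by positivity
  have hηM : η * (2 + 2 * M) = 2 / N := by rw [hη]; field_simp
  -- modulus
  obtain ⟨d, hd0, hd⟩ := Metric.uniformContinuousOn_iff.1
    ((isCompact_Icc (a := (0:ℝ)) (b := N)).uniformContinuousOn_of_continuous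
    hcont.continuousOn) η hη0
  have hd' : ∀ x y, 0 ≤ x → x ≤ N → 0 ≤ y → y ≤ N → |x - y| < d → |a x - a y| ≤ η :=
    fun x y hx hx' hy hy' h => (hd x ⟨hx, hx'⟩ y ⟨hy, hy'⟩ h).le
  -- power
  obtain ⟨κ, hκ0, hκ⟩ := Metric.continuousAt_iff.1
    (Real.continuousAt_rpow_const 1 ((m-3)/2) (Or.inl one_ne_zero)) 1 one_pos
  have hκ' : ∀ r s : ℝ, 0 < r → 0 < s → |s - r| < κ * r →
      s ^ ((m-3)/2) ≤ 3 * r ^ ((m-3)/2) := by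
    intro r s hr hs h
    have h2 : dist (s / r) 1 < κ := by
      rw [Real.dist_eq, show s / r - 1 = (s - r) / r by field_simp, abs_div, abs_of_pos hr,
        div_lt_iff₀ hr]; exact h
    have h3 := hκ h2
    rw [Real.one_rpow, Real.dist_eq] at h3
    have h4 : (s / r) ^ ((m-3)/2) ≤ 3 := by linarith [(abs_lt.1 h3).2]
    rw [Real.div_rpow hs.le hr.le, div_le_iff₀ (by positivity)] at h4
    exact h4
  set δ : ℝ := min (d / 2) (1 / 2) with hδ
  have hδ0 : 0 < δ := by positivity
  have hδd : δ < d := (min_le_left _ _).trans_lt (by linarith)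
  have hδ1 : δ ≤ 1 / 2 := min_le_right _ _
  set ε : ℝ := min (δ / 8) (κ * δ / 8) with hε
  have hε0 : 0 < ε := by positivity
  have hεδ : ε ≤ δ / 8 := min_le_left _ _
  have hεκ : ε ≤ κ * δ / 8 := min_le_right _ _
  -- clamp
  let cl : ℝ → ℝ := fun x => min (max |x| δ) N
  have hcl0 : ∀ x, δ ≤ cl x := fun x => le_min (le_max_right _ _) (by linarith)
  have hclN : ∀ x, cl x ≤ N := fun x => min_le_right _ _
  have hcllip : ∀ x y, |cl x - cl y| ≤ |x - y| := by
    intro x y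
    refine (abs_min_sub_min_le_max _ _ _ _).trans ?_
    rw [sub_self, abs_zero, max_eq_left (abs_nonneg _)]
    refine (abs_max_sub_max_le_abs _ _ _).trans (abs_abs_sub_abs_le _ _)
  have hclmin : ∀ x, |cl x - min |x| N| ≤ δ := by
    intro x
    refine (abs_min_sub_min_le_max _ _ _ _).trans ?_
    rw [sub_self, abs_zero, max_eq_left (abs_nonneg _)]
    have := abs_nonneg x
    rcases max_cases |x| δ with ⟨h, h'⟩ | ⟨h, h'⟩ <;> rw [h, abs_le] <;> constructor <;> linarith
  let b : ℝ → ℝ := fun x => a (cl x)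
  have hbc : Continuous b := hcont.comp (by fun_prop)
  have hbmod : ∀ x y, |x - y| < d → |b x - b y| ≤ η := fun x y h =>
    hd' _ _ (hδ0.le.trans (hcl0 x)) (hclN x) (hδ0.le.trans (hcl0 y)) (hclN y)
      ((hcllip x y).trans_lt h)
  have hbmin : ∀ x, |b x - a (min |x| N)| ≤ η := fun x =>
    hd' _ _ (hδ0.le.trans (hcl0 x)) (hclN x) (le_min (abs_nonneg _) hN0.le) (min_le_right _ _)
      ((hclmin x).trans_lt hδd)
  obtain ⟨f, hfs, hfe, hf0, hfc, hfl⟩ := smoothing b hbc ε hε0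
  have hfe := hfe (fun x => by simp [b, cl])
  have hf0 := hf0 (fun x => h0 _)
  have hfb : ∀ x, |f x - b x| ≤ η := fun x => hfc x η fun y hy => hbmod _ _ (by linarith)
  have hfm : ∀ x, |f x - a (min |x| N)| ≤ 2 * η := by
    intro x
    have h := abs_sub_le (f x) (b x) (a (min |x| N))
    linarith [hfb x, hbmin x]
  -- Lipschitz
  have hblip : ∀ r x y : ℝ, 0 < r → |x - r| < 2 * ε → |y - r| < 2 * ε →
      |b x - b y| ≤ 3 * K * r ^ ((m-3)/2) * |x - y| := by
    intro r x y hr hx hy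
    have hR : 0 ≤ 3 * K * r ^ ((m-3)/2) := by positivity
    rw [abs_lt] at hx hy
    by_cases hrd : r ≤ δ / 2
    · have e : ∀ z, -(2 * ε) < z - r → z - r < 2 * ε → cl z = min δ N := by
        intro z hz1 hz2
        have : |z| ≤ δ := by rw [abs_le]; constructor <;> linarith
        simp only [cl]; rw [max_eq_right this]
      have : b x = b y := by simp only [b]; rw [e x hx.1 hx.2, e y hy.1 hy.2]
      rw [this, sub_self, abs_zero]; positivity
    · have hrd := not_le.1 hrd
      have hκr : 2 * ε < κ * r := by nlinarith
      have hC : ∀ s ∈ Icc (r - 2 * ε) (r + 2 * ε), s ^ ((m-3)/2) ≤ 3 * r ^ ((m-3)/2) := by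
        intro s hs
        apply hκ' r s hr (by linarith [hs.1])
        refine lt_of_le_of_lt ?_ hκr
        rw [abs_le]; constructor <;> linarith [hs.1, hs.2]
      have hx0 : |x| = x := abs_of_pos (by linarith)
      have hy0 : |y| = y := abs_of_pos (by linarith)
      by_cases hxy : cl x = cl y
      · have : b x = b y := by simp only [b]; rw [hxy]
        rw [this, sub_self, abs_zero]; positivity
      · have hmem : cl x ∈ Icc (r - 2 * ε) (r + 2 * ε) ∧ cl y ∈ Icc (r - 2 * ε) (r + 2 * ε) := by
          simp only [cl, hx0, hy0, mem_Icc] at hxy ⊢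
          grind
        have h3 := a_lip hda hb hK0.le (r - 2 * ε) (r + 2 * ε) _ (by linarith) hC _ _ hmem.1 hmem.2
        calc |b x - b y| ≤ K * (3 * r ^ ((m-3)/2)) * |cl x - cl y| := h3
          _ = 3 * K * r ^ ((m-3)/2) * |cl x - cl y| := by ring
          _ ≤ _ := mul_le_mul_of_nonneg_left (hcllip x y) hR
  have hfd : ∀ r : ℝ, 0 < r → |deriv f r| ≤ 3 * K * r ^ ((m - 3) / 2) := by
    intro r hr
    have hD := ((hfs.differentiable (by simp)) r).hasDerivAt
    refine HasDerivAt.le_of_lip' hD (by positivity) ?_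
    filter_upwards [Metric.ball_mem_nhds r hε0] with y hy
    rw [Metric.mem_ball, Real.dist_eq, abs_lt] at hy
    rw [Real.norm_eq_abs, Real.norm_eq_abs]
    apply hfl
    intro t ht
    rw [abs_lt] at ht
    have := hblip r (y - t) (r - t) hr (by rw [abs_lt]; constructor <;> linarith)
      (by rw [abs_lt]; constructor <;> linarith)
    rwa [sub_sub_sub_cancel_right] at this
  -- scaling
  set l : ℝ := K / (K + 2 * η) with hl
  have hl0 : 0 < l := by positivity
  have hl1 : l ≤ 1 := by rw [hl, div_le_one (by positivity)]; linarith
  have hl2 : 1 - l ≤ 2 * η := by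
    have : 1 - l = 2 * η / (K + 2 * η) := by rw [hl]; field_simp; ring
    rw [this]
    exact div_le_self (by positivity) (by linarith)
  have hcl : ∀ x, |l * f x - a (min |x| N)| ≤ 2 / N := by
    intro x
    have e : l * f x - a (min |x| N) = l * (f x - a (min |x| N)) - (1 - l) * a (min |x| N) := by
      ring
    have g1 : |l * (f x - a (min |x| N))| ≤ 2 * η := by
      rw [abs_mul, abs_of_pos hl0]
      nlinarith [hfm x, abs_nonneg (f x - a (min |x| N))]
    have g2 : |(1 - l) * a (min |x| N)| ≤ 2 * η * M := by
      rw [abs_mul, abs_of_nonneg (sub_nonneg.2 hl1), abs_of_nonneg (h0 _)]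
      exact mul_le_mul hl2 (hM' _ (le_min (abs_nonneg _) hN0.le) (min_le_right _ _)) (h0 _)
        (by positivity)
    rw [e, ← hηM]
    have := abs_sub (l * (f x - a (min |x| N))) ((1 - l) * a (min |x| N))
    linarith
  have hge : ∀ x, a (min |x| N) ≤ l * f x + 2 / N := fun x => by
    linarith [(abs_le.1 (hcl x)).1]
  have h42 : 4 / N = 2 / N + 2 / N := by ring
  refine ⟨fun x => l * f x + 2 / N, ?_, ?_, ?_, ?_, ?_, ?_, ?_, ?_, ?_⟩
  · exact (contDiff_const.mul hfs).add contDiff_const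
  · intro r; simp only [hfe]
  · intro r
    have := mul_nonneg hl0.le (hf0 r)
    simp only; linarith
  · have g := (abs_le.1 (hfm 0)).2
    rw [abs_zero, min_eq_left hN0.le] at g
    have : l * f 0 ≤ K := by
      rw [hl, div_mul_eq_mul_div, div_le_iff₀ (by positivity)]
      exact mul_le_mul_of_nonneg_left (by linarith) hK0.le
    have h2 : 2 / N ≤ 2 := div_le_self (by norm_num) hN
    simp only; linarith
  · intro r hr
    have hD := ((hfs.differentiable (by simp)) r).hasDerivAt
    rw [((hD.const_mul l).add_const (2 / N)).deriv, abs_mul, abs_of_pos hl0]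
    nlinarith [hfd r hr, abs_nonneg (deriv f r)]
  · intro r hr
    have := hcl r
    rw [min_eq_left hr, habs] at this
    rw [abs_le] at this ⊢
    have h2 : 0 < 2 / N := by positivity
    constructor <;> simp only [h42] <;> linarith
  · intro r hr
    have := hge r
    rwa [min_eq_left hr, habs] at this
  · intro r hr
    have h2 : 1 ≤ min |r| N := le_min hr hN
    exact (h1 (min |r| N) (h2.trans (le_abs_self _))).trans
      (mul_le_mul_of_nonneg_left (hge r) hK0.le)
  · refine ⟨l * a N + 2 / N, N + 1, fun r hr => ?_⟩
    have hbN : ∀ y, N ≤ |y| → b y = a N := by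
      intro y hy
      simp only [b, cl]
      rw [min_eq_right (hy.trans (le_max_left _ _))]
    have := hfc r 0 (fun y hy => by
      have h3 := abs_sub_abs_le_abs_sub r y
      rw [abs_sub_comm] at hy
      rw [hbN r (by linarith), hbN y (by linarith)]; simp)
    have := abs_eq_zero.1 (le_antisymm this (abs_nonneg _))
    simp only
    rw [sub_eq_zero.1 this, hbN r (by linarith)]

/-- Proposition 5.1: approximation of a porous-medium nonlinearity satisfying
Assumption 2.1(a) with constant `K` by smooth nondegenerate nonlinearities `Aₙ` with bounded
derivatives satisfying the assumption with constant `3K`, with `𝔞ₙ = √(Aₙ') ≥ 2/n` and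
`sup_{|r| ≤ n} |𝔞(r) − 𝔞ₙ(r)| ≤ 4/n`. -/
theorem approximation_of_nonlinearity (m K : ℝ) (hm : 1 < m) (hK : 1 ≤ K)
    (A a a' : ℝ → ℝ) (hA : SatisfiesAssumptionA m K A a a') :
    ∀ n : ℕ, 1 ≤ n → ∃ An an an' : ℝ → ℝ,
      ContDiff ℝ (⊤ : ℕ∞) An ∧
      (∀ k : ℕ, 1 ≤ k → ∃ M : ℝ, ∀ r : ℝ, |iteratedDeriv k An r| ≤ M) ∧
      SatisfiesAssumptionA m (3 * K) An an an' ∧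
      (∀ r : ℝ, 2 / (n : ℝ) ≤ an r) ∧
      (∀ r : ℝ, |r| ≤ (n : ℝ) → |a r - an r| ≤ 4 / (n : ℝ)) := by
  intro n hn
  obtain ⟨-, hodd, h0, hd, hda, ha0, hb, h1, hint1, hint2⟩ := hA
  have hN : (1:ℝ) ≤ n := by exact_mod_cast hn
  have hK0 : 0 < K := by linarith
  have hcont := a_cont hm hodd h0 hd hda hb
  have he := a_even hodd h0 hd
  obtain ⟨f, hfs, hfe, hf2, hf0, hfd, hfc, hfa, hf1, c, R, hcR⟩ :=
    core m K hK a a' hcont he h0 hda ((le_abs_self _).trans ha0) hb h1 n hN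
  have hfpos : ∀ r, 0 < f r := fun r => lt_of_lt_of_le (by positivity) (hf2 r)
  have hfcont := hfs.continuous
  have hi : ∀ x y, IntervalIntegrable f volume x y := fun x y => hfcont.intervalIntegrable x y
  have hia : ∀ x y, IntervalIntegrable a volume x y := fun x y => hcont.intervalIntegrable x y
  have hsq : ContDiff ℝ (⊤ : ℕ∞) (fun x => (f x)^2) := hfs.pow 2
  have hAd : ∀ r, HasDerivAt (fun r => ∫ ζ in (0:ℝ)..r, (f ζ)^2) ((f r)^2) r := fun r =>
    integral_hasDerivAt_right (hsq.continuous.intervalIntegrable _ _)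
      (hsq.continuous.stronglyMeasurableAtFilter _ _) hsq.continuous.continuousAt
  have hAderiv : deriv (fun r => ∫ ζ in (0:ℝ)..r, (f ζ)^2) = fun r => (f r)^2 :=
    funext fun r => (hAd r).deriv
  -- local comparison
  have hcomp : ∀ x y, -1 ≤ x → x ≤ y → y ≤ 1 →
      (∫ ζ in (0:ℝ)..y, a ζ) - (∫ ζ in (0:ℝ)..x, a ζ) ≤
      (∫ ζ in (0:ℝ)..y, f ζ) - (∫ ζ in (0:ℝ)..x, f ζ) := by
    intro x y hx hxy hy
    rw [integral_interval_sub_left (hia _ _) (hia _ _),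
      integral_interval_sub_left (hi _ _) (hi _ _)]
    apply integral_mono_on hxy (hia _ _) (hi _ _)
    intro z hz
    apply hfa
    exact (abs_le.2 ⟨by linarith [hz.1], by linarith [hz.2]⟩ : |z| ≤ 1).trans hN
  have hamono : ∀ x y, x ≤ y → 0 ≤ (∫ ζ in (0:ℝ)..y, a ζ) - (∫ ζ in (0:ℝ)..x, a ζ) := by
    intro x y hxy
    rw [integral_interval_sub_left (hia _ _) (hia _ _)]
    exact integral_nonneg hxy fun z _ => h0 z
  have hfmono : ∀ x y, x ≤ y → 0 ≤ (∫ ζ in (0:ℝ)..y, f ζ) - (∫ ζ in (0:ℝ)..x, f ζ) := by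
    intro x y hxy
    rw [integral_interval_sub_left (hi _ _) (hi _ _)]
    exact integral_nonneg hxy fun z _ => (hfpos z).le
  -- far
  have hfar : ∀ x y, x ≤ y → (1 ≤ x ∨ y ≤ -1) →
      y - x ≤ K * ((∫ ζ in (0:ℝ)..y, f ζ) - (∫ ζ in (0:ℝ)..x, f ζ)) := by
    intro x y hxy h
    rw [integral_interval_sub_left (hi _ _) (hi _ _), ← intervalIntegral.integral_const_mul]
    have : y - x = ∫ ζ in x..y, (1:ℝ) := by simp
    rw [this]
    apply integral_mono_on hxy (by simp) ((hi _ _).const_mul K)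
    intro z hz
    apply hf1
    rcases h with h | h
    · exact (h.trans hz.1).trans (le_abs_self _)
    · exact (by linarith [hz.2] : 1 ≤ -z).trans (neg_le_abs _)
  have hnear : ∀ x y, -1 ≤ x → x ≤ y → y ≤ 1 → (x = -1 ∨ y = 1) →
      y - x ≤ K * ((∫ ζ in (0:ℝ)..y, f ζ) - (∫ ζ in (0:ℝ)..x, f ζ)) := by
    intro x y hx hxy hy h
    have g := hint1 y x (by rcases h with h | h <;> simp [h])
    rw [abs_of_nonneg (sub_nonneg.2 hxy), abs_of_nonneg (hamono x y hxy)] at g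
    exact g.trans (mul_le_mul_of_nonneg_left (hcomp x y hx hxy hy) hK0.le)
  have hbig : ∀ x y, x ≤ y → (x ≤ -1 ∨ 1 ≤ y) →
      y - x ≤ K * ((∫ ζ in (0:ℝ)..y, f ζ) - (∫ ζ in (0:ℝ)..x, f ζ)) := by
    intro x y hxy h
    rcases le_total 1 x with hx1 | hx1
    · exact hfar x y hxy (Or.inl hx1)
    rcases le_total y (-1) with hy1 | hy1
    · exact hfar x y hxy (Or.inr hy1)
    rcases le_total x (-1) with hx | hx
    · have g1 := hfar x (-1) hx (Or.inr le_rfl)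
      rcases le_total y 1 with hy | hy
      · have g2 := hnear (-1) y le_rfl hy1 hy (Or.inl rfl)
        linarith
      · have g2 := hnear (-1) 1 le_rfl (by norm_num) le_rfl (Or.inl rfl)
        have g3 := hfar 1 y hy (Or.inl le_rfl)
        linarith
    · rcases h with h | h
      · have : x = -1 := le_antisymm h hx
        rcases le_total y 1 with hy | hy
        · exact hnear x y hx hxy hy (Or.inl this)
        · have g2 := hnear x 1 hx hx1 le_rfl (Or.inr rfl)
          have g3 := hfar 1 y hy (Or.inl le_rfl)
          linarith
      · have g2 := hnear x 1 hx hx1 le_rfl (Or.inr rfl)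
        have g3 := hfar 1 y h (Or.inl le_rfl)
        linarith
  refine ⟨fun r => ∫ ζ in (0:ℝ)..r, (f ζ)^2, f, deriv f, ?_, ?_, ⟨?_, ?_, ?_, hAd, ?_, ?_, hfd,
    ?_, ?_, ?_⟩, hf2, hfc⟩
  · rw [contDiff_infty_iff_deriv, hAderiv]
    exact ⟨fun r => (hAd r).differentiableAt, hsq⟩
  · intro k hk
    obtain ⟨j, rfl⟩ := Nat.exists_eq_add_of_le' hk
    rw [iteratedDeriv_succ', hAderiv]
    exact smooth_bdd _ hsq (c^2) R (fun x hx => by simp only [hcR x hx]) j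
  · apply strictMono_of_deriv_pos
    intro r
    rw [hAderiv]; exact pow_pos (hfpos r) 2
  · intro r
    have := intervalIntegral.integral_comp_neg (a := 0) (b := r) (fun x => (f x)^2)
    simp only [hfe, neg_zero] at this
    simp only
    rw [this, integral_symm]
  · exact fun r => (hfpos r).le
  · exact fun r _ => ((hfs.differentiable (by simp)) r).hasDerivAt
  · rw [abs_of_pos (hfpos 0)]; exact hf0
  · intro r hr
    have := hf1 r hr
    have h2 := mul_pos hK0 (hfpos r)
    nlinarith
  · intro r rt hr
    wlog hle : rt ≤ r generalizing r rt with H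
    · rw [abs_sub_comm r, abs_sub_comm (∫ ζ in (0:ℝ)..r, f ζ)]
      exact H rt r (by rwa [max_comm]) (not_le.1 hle).le
    rw [abs_of_nonneg (sub_nonneg.2 hle), abs_of_nonneg (hfmono _ _ hle)]
    have g := hbig rt r hle (by
      rcases le_max_iff.1 hr with h | h <;> rcases le_abs.1 h with h | h
      · right; exact h
      · left; linarith
      · right; linarith
      · left; linarith)
    have := mul_nonneg hK0.le (hfmono _ _ hle)
    linarith
  · intro r rt hr
    wlog hle : rt ≤ r generalizing r rt with H
    · rw [abs_sub_comm r, abs_sub_comm (∫ ζ in (0:ℝ)..r, f ζ)]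
      exact H rt r (by rwa [max_comm]) (not_le.1 hle).le
    have g := hint2 r rt hr
    rw [abs_of_nonneg (hamono _ _ hle)] at g
    rw [abs_of_nonneg (hfmono _ _ hle)]
    obtain ⟨g1, g2⟩ := max_lt_iff.1 hr
    have g3 := hcomp rt r (abs_lt.1 g2).1.le hle (abs_lt.1 g1).2.le
    have g4 := mul_le_mul_of_nonneg_left g3 hK0.le
    have := mul_nonneg hK0.le (hfmono _ _ hle)
    linarith
end
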